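/- Let p ∈ (2, ∞). There exists a constant C_p > 0 (depending only on p) such that for every R ≥ 0 and all u, v ∈ H¹(ℝ², ℂ) one has ‖K₀ ∗ |u|² − K_R ∗ |v|²‖_p ≤ C_p ( ‖v‖_{H¹}² R + (‖u‖_{H¹} + ‖v‖_{H¹}) ‖u − v‖₂ ). -/

import Mathlib

noncomputable section
open MeasureTheory ENNReal
open scoped RealInnerProductSpace

/-- The plane `ℝ²`. -/
abbrev E2 : Type := EuclideanSpace ℝ (Fin 2)

/-- The rotation by 90 degrees: `x^⊥ = (-x₂, x₁)`. -/
def perp (x : E2) : E2 := (WithLp.equiv 2 (Fin 2 → ℝ)).symm ![-(x 1), x 0]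

/-- The Aharonov–Bohm kernel `K_R(x) = x^⊥ / (max R ‖x‖)²` (with `K_R 0 = 0`,
also when `R = 0`, by the junk-value convention `(0 : ℝ)⁻¹ = 0`). -/
def K (R : ℝ) (x : E2) : E2 := ((max R ‖x‖) ^ 2)⁻¹ • perp x

/-- The standard basis of `ℝ²`. -/
def e2 (j : Fin 2) : E2 := EuclideanSpace.single j 1

/-- Componentwise convolution of the vector kernel `K_R` with a scalar density. -/
def convKs (R : ℝ) (ρ : E2 → ℝ) (x : E2) : E2 := ∫ y, ρ y • K R (x - y)

/-- Convolution of the vector kernel `K_R` with a vector field, summed over components. -/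
def convKv (R : ℝ) (F : E2 → E2) (x : E2) : ℝ := ∫ y, ⟪K R (x - y), F y⟫

/-- The current `J[u] = i(u∇ū - ū∇u) = 2 Im(ū ∇u)`, an `ℝ²`-valued function. -/
def Jf (u : E2 → ℂ) (x : E2) : E2 :=
  (WithLp.equiv 2 (Fin 2 → ℝ)).symm fun j =>
    2 * ((starRingEnd ℂ) (u x) * fderiv ℝ u x (e2 j)).im

/-- The `H¹` norm `(‖u‖₂² + ‖∇u‖₂²)^{1/2}` (extended-real valued). -/
def H1 (u : E2 → ℂ) : ℝ≥0∞ :=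
  (eLpNorm u 2 volume ^ 2 + eLpNorm (fun x => fderiv ℝ u x) 2 volume ^ 2) ^ (1 / 2 : ℝ)

/-- The `H²` norm `(‖u‖₂² + ‖∇u‖₂² + ‖∇²u‖₂²)^{1/2}` (extended-real valued). -/
def H2 (u : E2 → ℂ) : ℝ≥0∞ :=
  (eLpNorm u 2 volume ^ 2 + eLpNorm (fun x => fderiv ℝ u x) 2 volume ^ 2
    + eLpNorm (fun x => fderiv ℝ (fderiv ℝ u) x) 2 volume ^ 2) ^ (1 / 2 : ℝ)

theorem aux_young (f g : E2 → ℝ≥0∞) (hf : Measurable f) (hg : Measurable g) (p r q : ℝ)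
    (hr : 0 < r) (hq : 0 < q) (hrp : r ≤ p) (hqp : q ≤ p) (h : 1 / r + 1 / q = 1 + 1 / p) :
    ∫⁻ x, (∫⁻ y, g (x - y) * f y) ^ p ≤ (∫⁻ x, g x ^ r) ^ (p / r) * (∫⁻ x, f x ^ q) ^ (p / q) := by
  have hp : 0 < p := hr.trans_le hrp
  set a := ∫⁻ x, g x ^ r with ha
  set b := ∫⁻ x, f x ^ q with hb
  have hα : 0 ≤ 1 / r - 1 / p := sub_nonneg.2 (one_div_le_one_div_of_le hr hrp)
  have hβ : 0 ≤ 1 / q - 1 / p := sub_nonneg.2 (one_div_le_one_div_of_le hq hqp)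
  have hp' : 0 ≤ 1 / p := by positivity
  have key : ∀ x, (∫⁻ y, g (x - y) * f y) ≤
      (∫⁻ y, g (x - y) ^ r * f y ^ q) ^ (1 / p) * a ^ (1 / r - 1 / p) * b ^ (1 / q - 1 / p) := by
    intro x
    have h1 := ENNReal.lintegral_prod_norm_pow_le (μ := (volume : Measure E2)) (Finset.univ : Finset (Fin 3))
      (f := ![fun y => g (x - y) ^ r * f y ^ q, fun y => g (x - y) ^ r, fun y => f y ^ q])
      (p := ![1 / p, 1 / r - 1 / p, 1 / q - 1 / p])
      (by
        intro i _
        fin_cases i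
        · exact ((((hg.comp (measurable_const.sub measurable_id)).pow_const r)).mul
            (hf.pow_const q)).aemeasurable
        · exact (((hg.comp (measurable_const.sub measurable_id)).pow_const r)).aemeasurable
        · exact (hf.pow_const q).aemeasurable)
      (by simp only [Fin.sum_univ_three, Matrix.cons_val]; linarith)
      (by
        intro i _
        fin_cases i
        · exact hp'
        · exact hα
        · exact hβ)
    simp only [Fin.prod_univ_three, Matrix.cons_val] at h1
    have h2 : (∫⁻ y, g (x - y) ^ r) = a := by
      rw [ha]
      exact lintegral_sub_left_eq_self (fun y => g y ^ r) x
    rw [h2] at h1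
    refine le_trans (le_of_eq ?_) h1
    refine lintegral_congr fun y => ?_
    rw [ENNReal.mul_rpow_of_nonneg _ _ hp', ← ENNReal.rpow_mul, ← ENNReal.rpow_mul,
      ← ENNReal.rpow_mul, ← ENNReal.rpow_mul]
    have e1 : g (x - y) = g (x - y) ^ (r * (1 / p)) * g (x - y) ^ (r * (1 / r - 1 / p)) := by
      rw [← ENNReal.rpow_add_of_nonneg _ _ (by positivity) (mul_nonneg hr.le hα)]
      have : r * (1 / p) + r * (1 / r - 1 / p) = 1 := by field_simp; ring
      rw [this, ENNReal.rpow_one]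
    have e2 : f y = f y ^ (q * (1 / p)) * f y ^ (q * (1 / q - 1 / p)) := by
      rw [← ENNReal.rpow_add_of_nonneg _ _ (by positivity) (mul_nonneg hq.le hβ)]
      have : q * (1 / p) + q * (1 / q - 1 / p) = 1 := by field_simp; ring
      rw [this, ENNReal.rpow_one]
    conv_lhs => rw [e1, e2]
    ring
  have hm : Measurable (fun z : E2 × E2 => g (z.1 - z.2) ^ r * f z.2 ^ q) :=
    ((hg.comp (measurable_fst.sub measurable_snd)).pow_const r).mul
      ((hf.comp measurable_snd).pow_const q)
  calc ∫⁻ x, (∫⁻ y, g (x - y) * f y) ^ p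
      ≤ ∫⁻ x, (∫⁻ y, g (x - y) ^ r * f y ^ q) *
          (a ^ ((1 / r - 1 / p) * p) * b ^ ((1 / q - 1 / p) * p)) := by
        refine lintegral_mono fun x => ?_
        refine (ENNReal.rpow_le_rpow (key x) hp.le).trans (le_of_eq ?_)
        rw [ENNReal.mul_rpow_of_nonneg _ _ hp.le, ENNReal.mul_rpow_of_nonneg _ _ hp.le,
          ← ENNReal.rpow_mul, ← ENNReal.rpow_mul, ← ENNReal.rpow_mul, one_div_mul_cancel hp.ne',
          ENNReal.rpow_one, mul_assoc]
    _ = (∫⁻ x, ∫⁻ y, g (x - y) ^ r * f y ^ q) *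
          (a ^ ((1 / r - 1 / p) * p) * b ^ ((1 / q - 1 / p) * p)) :=
        lintegral_mul_const _ hm.lintegral_prod_right'
    _ = (a * b) * (a ^ ((1 / r - 1 / p) * p) * b ^ ((1 / q - 1 / p) * p)) := by
        congr 1
        rw [lintegral_lintegral_swap hm.aemeasurable]
        have : ∀ y, ∫⁻ x, g (x - y) ^ r * f y ^ q = a * f y ^ q := by
          intro y
          rw [lintegral_mul_const _ (by
            exact (hg.comp (measurable_id.sub measurable_const)).pow_const r)]
          rw [lintegral_sub_right_eq_self (fun x => g x ^ r) y]
        simp_rw [this]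
        rw [lintegral_const_mul _ (hf.pow_const q)]
    _ = (a * a ^ ((1 / r - 1 / p) * p)) * (b * b ^ ((1 / q - 1 / p) * p)) := by ring
    _ = a ^ (p / r) * b ^ (p / q) := by
        congr 1
        · nth_rw 1 [← ENNReal.rpow_one a]
          rw [← ENNReal.rpow_add_of_nonneg _ _ zero_le_one (mul_nonneg hα hp.le)]
          congr 1; field_simp; ring
        · nth_rw 1 [← ENNReal.rpow_one b]
          rw [← ENNReal.rpow_add_of_nonneg _ _ zero_le_one (mul_nonneg hβ hp.le)]
          congr 1; field_simp; ring

theorem aux_oneD (u u' : ℝ → ℂ) (hu : ∀ x, HasDerivAt u (u' x) x)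
    (h0 : ∫⁻ x, ‖u x‖ₑ ^ 2 < ⊤) (h1 : ∫⁻ x, ‖u' x‖ₑ ^ 2 < ⊤) (n : ℕ) (x : ℝ) :
    ‖u x‖ₑ ^ (n + 1) ≤ (n + 1 : ℝ≥0∞) * ∫⁻ t, ‖u t‖ₑ ^ n * ‖u' t‖ₑ := by
  have hcont : Continuous u := continuous_iff_continuousAt.2 fun x => (hu x).continuousAt
  have hu'eq : u' = deriv u := funext fun x => (hu x).deriv.symm
  have hmeas : Measurable u' := hu'eq ▸ measurable_deriv u
  have conv : ∀ w : ℝ → ℂ, Measurable w → ∫⁻ x, ‖w x‖ₑ ^ 2 < ⊤ → MemLp w 2 volume := by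
    intro w hw h
    refine ⟨hw.aestronglyMeasurable, ?_⟩
    rw [eLpNorm_lt_top_iff_lintegral_rpow_enorm_lt_top (by simp) (by simp)]
    simpa using h
  have m0 := conv u hcont.measurable h0
  have m1 := conv u' hmeas h1
  have i0 : Integrable (fun x => u x * u x) := m0.integrable_mul m0
  have i1 : Integrable (fun x => u' x * u x + u x * u' x) :=
    (m1.integrable_mul m0).add (m0.integrable_mul m1)
  have t0 : Filter.Tendsto (fun x => u x * u x) Filter.atBot (nhds 0) :=
    tendsto_zero_of_hasDerivAt_of_integrableOn_Iic (a := 0)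
      (fun x _ => (hu x).mul (hu x)) i1.integrableOn i0.integrableOn
  have t1 : Filter.Tendsto (fun x => ‖u x‖) Filter.atBot (nhds 0) := by
    have := (t0.norm).sqrt
    simpa [Real.sqrt_mul_self] using this
  have t2 : Filter.Tendsto u Filter.atBot (nhds 0) := tendsto_zero_iff_norm_tendsto_zero.2 t1
  rcases eq_or_ne (∫⁻ t, ‖u t‖ₑ ^ n * ‖u' t‖ₑ) ⊤ with hI | hI
  · rw [hI, ENNReal.mul_top (by positivity)]; exact le_top
  set g' : ℝ → ℂ := fun t => ((n + 1 : ℕ) : ℂ) * u t ^ n * u' t with hg'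
  have hgd : ∀ t, HasDerivAt (fun t => u t ^ (n + 1)) (g' t) t := fun t => by
    have := (hu t).pow (n + 1)
    rw [Nat.add_sub_cancel] at this
    exact this
  have hgm : Measurable g' := ((hcont.measurable.pow_const n).const_mul _).mul hmeas
  have hgn : ∫⁻ t, ‖g' t‖ₑ = (n + 1 : ℝ≥0∞) * ∫⁻ t, ‖u t‖ₑ ^ n * ‖u' t‖ₑ := by
    have hmm : Measurable fun t => ‖u t‖ₑ ^ n * ‖u' t‖ₑ :=
      ((hcont.measurable.enorm).pow_const n).mul hmeas.enorm
    rw [← lintegral_const_mul _ hmm]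
    refine lintegral_congr fun t => ?_
    simp only [hg', enorm_mul, enorm_pow, mul_assoc]
    congr 1
    rw [← ofReal_norm, Complex.norm_natCast, ENNReal.ofReal_natCast]
    push_cast; rfl
  have hgi : Integrable g' := ⟨hgm.aestronglyMeasurable, by
    rw [hasFiniteIntegral_iff_enorm, hgn]
    exact ENNReal.mul_lt_top (by finiteness) hI.lt_top⟩
  rw [← hgn]
  have hle : ∀ s, ‖u x ^ (n + 1) - u s ^ (n + 1)‖ₑ ≤ ∫⁻ t, ‖g' t‖ₑ := by
    intro s
    rw [← intervalIntegral.integral_eq_sub_of_hasDerivAt (fun t _ => hgd t)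
      hgi.intervalIntegrable, ← ofReal_norm, intervalIntegral.norm_intervalIntegral_eq,
      ofReal_norm]
    exact (enorm_integral_le_lintegral_enorm _).trans (setLIntegral_le_lintegral _ _)
  have hlim : Filter.Tendsto (fun s => ‖u x ^ (n + 1) - u s ^ (n + 1)‖ₑ) Filter.atBot
      (nhds ‖u x ^ (n + 1) - 0 ^ (n + 1)‖ₑ) :=
    (tendsto_const_nhds.sub (t2.pow (n + 1))).enorm
  have := le_of_tendsto' hlim hle
  simpa using this

/-- coordinates -/
def phi (z : ℝ × ℝ) : E2 := WithLp.toLp 2 ![z.1, z.2]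

theorem phi_mp : MeasurePreserving phi volume volume := by
  have h1 := (volume_preserving_finTwoArrow ℝ).symm
  have h2 := PiLp.volume_preserving_toLp (Fin 2)
  exact h2.comp h1

theorem aux_sob_step (u : E2 → ℂ) (hu : Differentiable ℝ u)
    (h0 : ∫⁻ x, ‖u x‖ₑ ^ 2 < ⊤) (h1 : ∫⁻ x, ‖fderiv ℝ u x‖ₑ ^ 2 < ⊤) (n : ℕ) :
    ∫⁻ x, ‖u x‖ₑ ^ (2 * (n + 1)) ≤
      ((n + 1 : ℝ≥0∞) * ∫⁻ x, ‖u x‖ₑ ^ n * ‖fderiv ℝ u x‖ₑ) ^ 2 := by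
  have mu : Measurable fun x => ‖u x‖ₑ := hu.continuous.measurable.enorm
  have md : Measurable fun x => ‖fderiv ℝ u x‖ₑ := (measurable_fderiv ℝ u).enorm
  set w : ℝ × ℝ → ℂ := fun z => u (phi z) with hw
  set d : ℝ × ℝ → ℝ≥0∞ := fun z => ‖fderiv ℝ u (phi z)‖ₑ with hd
  have mw : Measurable fun z => ‖w z‖ₑ := mu.comp phi_mp.measurable
  have mdd : Measurable d := md.comp phi_mp.measurable
  rw [← phi_mp.lintegral_comp (mu.pow_const _)] at h0 ⊢
  rw [← phi_mp.lintegral_comp (md.pow_const _)] at h1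
  have mud : Measurable fun x => ‖u x‖ₑ ^ n * ‖fderiv ℝ u x‖ₑ := (mu.pow_const n).mul md
  rw [← phi_mp.lintegral_comp mud]
  change ∫⁻ z, ‖w z‖ₑ ^ 2 < ⊤ at h0
  change ∫⁻ z, d z ^ 2 < ⊤ at h1
  change ∫⁻ z, ‖w z‖ₑ ^ (2 * (n + 1)) ≤ ((n + 1 : ℝ≥0∞) * ∫⁻ z, ‖w z‖ₑ ^ n * d z) ^ 2
  -- derivatives along lines
  have D1 : ∀ a b, HasDerivAt (fun t => w (t, b)) (fderiv ℝ u (phi (a, b)) (e2 0)) a := by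
    intro a b
    have hphi : HasDerivAt (fun t => phi (t, b)) (e2 0) a := by
      have : (fun t => phi (t, b)) = fun t => t • e2 0 + phi (0, b) := by
        funext t; ext i; fin_cases i <;> simp [phi, e2]
      rw [this]
      simpa using ((hasDerivAt_id a).smul_const (e2 0)).add_const (phi (0, b))
    exact (hu (phi (a, b))).hasFDerivAt.comp_hasDerivAt a hphi
  have D2 : ∀ a b, HasDerivAt (fun t => w (a, t)) (fderiv ℝ u (phi (a, b)) (e2 1)) b := by
    intro a b
    have hphi : HasDerivAt (fun t => phi (a, t)) (e2 1) b := by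
      have : (fun t => phi (a, t)) = fun t => t • e2 1 + phi (a, 0) := by
        funext t; ext i; fin_cases i <;> simp [phi, e2]
      rw [this]
      simpa using ((hasDerivAt_id b).smul_const (e2 1)).add_const (phi (a, 0))
    exact (hu (phi (a, b))).hasFDerivAt.comp_hasDerivAt b hphi
  have hle : ∀ z (j : Fin 2), ‖fderiv ℝ u (phi z) (e2 j)‖ₑ ≤ d z := by
    intro z j
    have := (fderiv ℝ u (phi z)).le_opNorm (e2 j)
    have he : ‖e2 j‖ = 1 := by simp [e2]
    rw [he, mul_one] at this
    exact enorm_le_iff_norm_le.2 this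
  set G1 : ℝ → ℝ≥0∞ := fun b => (n + 1 : ℝ≥0∞) * ∫⁻ t, ‖w (t, b)‖ₑ ^ n * d (t, b) with hG1
  set G2 : ℝ → ℝ≥0∞ := fun a => (n + 1 : ℝ≥0∞) * ∫⁻ t, ‖w (a, t)‖ₑ ^ n * d (a, t) with hG2
  have mprod : Measurable fun z => ‖w z‖ₑ ^ n * d z := (mw.pow_const n).mul mdd
  have mG1 : Measurable G1 := mprod.lintegral_prod_left'.const_mul _
  have mG2 : Measurable G2 := mprod.lintegral_prod_right'.const_mul _
  have A1 : ∀ᵐ b : ℝ, ∀ a, ‖w (a, b)‖ₑ ^ (n + 1) ≤ G1 b := by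
    rw [Measure.volume_eq_prod, lintegral_prod_symm _ (mw.pow_const 2).aemeasurable] at h0
    rw [Measure.volume_eq_prod, lintegral_prod_symm _ (mdd.pow_const 2).aemeasurable] at h1
    filter_upwards [ae_lt_top (mw.pow_const 2).lintegral_prod_left' h0.ne,
      ae_lt_top (mdd.pow_const 2).lintegral_prod_left' h1.ne] with b hb0 hb1 a
    refine (aux_oneD (fun t => w (t, b)) _ (fun t => D1 t b) hb0
      (lt_of_le_of_lt (lintegral_mono fun t => ?_) hb1) n a).trans ?_
    · exact pow_le_pow_left' (hle (t, b) 0) 2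
    · simp only [hG1]
      gcongr
      exact hle _ 0
  have A2 : ∀ᵐ a : ℝ, ∀ b, ‖w (a, b)‖ₑ ^ (n + 1) ≤ G2 a := by
    rw [Measure.volume_eq_prod, lintegral_prod _ (mw.pow_const 2).aemeasurable] at h0
    rw [Measure.volume_eq_prod, lintegral_prod _ (mdd.pow_const 2).aemeasurable] at h1
    filter_upwards [ae_lt_top (mw.pow_const 2).lintegral_prod_right' h0.ne,
      ae_lt_top (mdd.pow_const 2).lintegral_prod_right' h1.ne] with a hb0 hb1 b
    refine (aux_oneD (fun t => w (a, t)) _ (fun t => D2 a t) hb0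
      (lt_of_le_of_lt (lintegral_mono fun t => ?_) hb1) n b).trans ?_
    · exact pow_le_pow_left' (hle (a, t) 1) 2
    · simp only [hG2]
      gcongr
      exact hle _ 1
  calc ∫⁻ z, ‖w z‖ₑ ^ (2 * (n + 1))
      = ∫⁻ a, ∫⁻ b, ‖w (a, b)‖ₑ ^ (2 * (n + 1)) := by
        rw [Measure.volume_eq_prod, lintegral_prod _ (mw.pow_const _).aemeasurable]
    _ ≤ ∫⁻ a, ∫⁻ b, G2 a * G1 b := by
        refine lintegral_mono_ae ?_
        filter_upwards [A2] with a ha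
        refine lintegral_mono_ae ?_
        filter_upwards [A1] with b hb
        rw [two_mul, pow_add]
        exact mul_le_mul' (ha b) (hb a)
    _ = (∫⁻ a, G2 a) * ∫⁻ b, G1 b := lintegral_lintegral_mul mG2.aemeasurable mG1.aemeasurable
    _ = _ := by
        rw [hG1, hG2, lintegral_const_mul _ mprod.lintegral_prod_left',
          lintegral_const_mul _ mprod.lintegral_prod_right', sq]
        congr 2
        · rw [Measure.volume_eq_prod, lintegral_prod _ mprod.aemeasurable]
        · rw [Measure.volume_eq_prod, lintegral_prod_symm _ mprod.aemeasurable]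

def SS (u : E2 → ℂ) : ℝ≥0∞ := (∫⁻ x, ‖u x‖ₑ ^ 2) + ∫⁻ x, ‖fderiv ℝ u x‖ₑ ^ 2

theorem aux_sob_nat (u : E2 → ℂ) (hu : Differentiable ℝ u) (h : SS u < ⊤) (n : ℕ) :
    ∫⁻ x, ‖u x‖ₑ ^ (2 * (n + 1)) ≤ ((n + 1).factorial : ℝ≥0∞) ^ 2 * SS u ^ (n + 1) := by
  have h0 : ∫⁻ x, ‖u x‖ₑ ^ 2 < ⊤ := lt_of_le_of_lt le_self_add h
  have h1 : ∫⁻ x, ‖fderiv ℝ u x‖ₑ ^ 2 < ⊤ := lt_of_le_of_lt le_add_self h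
  have mu : Measurable fun x => ‖u x‖ₑ := hu.continuous.measurable.enorm
  have md : Measurable fun x => ‖fderiv ℝ u x‖ₑ := (measurable_fderiv ℝ u).enorm
  induction n with
  | zero =>
    have hh : ∫⁻ x, ‖u x‖ₑ ^ 2 ≤ SS u := le_self_add
    simpa using hh
  | succ n ih =>
    refine (aux_sob_step u hu h0 h1 (n + 1)).trans ?_
    have cs := ENNReal.lintegral_mul_norm_pow_le (μ := (volume : Measure E2))
      (f := fun x => ‖u x‖ₑ ^ (2 * (n + 1))) (g := fun x => ‖fderiv ℝ u x‖ₑ ^ 2)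
      (p := 1 / 2) (q := 1 / 2)
      (mu.pow_const _).aemeasurable (md.pow_const _).aemeasurable (by norm_num) (by norm_num)
      (by norm_num)
    have e : ∀ (a : ℝ≥0∞) (k : ℕ), (a ^ (2 * k)) ^ (1 / 2 : ℝ) = a ^ k := by
      intro a k
      rw [← ENNReal.rpow_natCast, ← ENNReal.rpow_mul, ← ENNReal.rpow_natCast]
      congr 1; push_cast; ring
    have e' : ∀ (a : ℝ≥0∞), (a ^ 2) ^ (1 / 2 : ℝ) = a := by
      intro a; simpa using e a 1
    have e'' : ∀ (a : ℝ≥0∞), (a ^ (1 / 2 : ℝ)) ^ 2 = a := by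
      intro a
      rw [← ENNReal.rpow_natCast, ← ENNReal.rpow_mul]; norm_num
    simp only [e, e'] at cs
    calc _ ≤ (((n + 1 : ℕ) + 1 : ℝ≥0∞) * ((∫⁻ x, ‖u x‖ₑ ^ (2 * (n + 1))) ^ (1 / 2 : ℝ) *
          (∫⁻ x, ‖fderiv ℝ u x‖ₑ ^ 2) ^ (1 / 2 : ℝ))) ^ 2 := by gcongr
      _ = ((n + 1 : ℕ) + 1 : ℝ≥0∞) ^ 2 * ((∫⁻ x, ‖u x‖ₑ ^ (2 * (n + 1))) *
          (∫⁻ x, ‖fderiv ℝ u x‖ₑ ^ 2)) := by rw [mul_pow, mul_pow, e'', e'']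
      _ ≤ ((n + 1 : ℕ) + 1 : ℝ≥0∞) ^ 2 * ((((n + 1).factorial : ℝ≥0∞) ^ 2 * SS u ^ (n + 1)) *
          SS u) := by gcongr; exact le_add_self
      _ = _ := by
        rw [Nat.factorial_succ (n + 1)]; push_cast; ring

theorem aux_sob (m : ℝ) (hm : 1 < m) : ∃ C : ℝ≥0∞, C ≠ ⊤ ∧ ∀ u : E2 → ℂ, Differentiable ℝ u →
    SS u < ⊤ → ∫⁻ x, ‖u x‖ₑ ^ (2 * m) ≤ C * SS u ^ m := by
  obtain ⟨n, hn⟩ := exists_nat_gt (m - 1)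
  have hn0 : (0 : ℝ) < n := by linarith
  set θ := (m - 1) / n with hθ
  have hθ0 : 0 ≤ θ := div_nonneg (by linarith) hn0.le
  have hθ1 : θ ≤ 1 := (div_le_one hn0).2 hn.le
  refine ⟨(((n + 1).factorial : ℝ≥0∞) ^ 2) ^ θ, by finiteness, fun u hu h => ?_⟩
  have mu : Measurable fun x => ‖u x‖ₑ := hu.continuous.measurable.enorm
  have hol := ENNReal.lintegral_mul_norm_pow_le (μ := (volume : Measure E2))
      (f := fun x => ‖u x‖ₑ ^ 2) (g := fun x => ‖u x‖ₑ ^ (2 * (n + 1)))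
      (p := 1 - θ) (q := θ)
      (mu.pow_const _).aemeasurable (mu.pow_const _).aemeasurable (by linarith) (by linarith)
      (by ring)
  have hθn : θ * n = m - 1 := by rw [hθ]; field_simp
  have e : ∀ x, (‖u x‖ₑ ^ 2) ^ (1 - θ) * (‖u x‖ₑ ^ (2 * (n + 1))) ^ θ = ‖u x‖ₑ ^ (2 * m) := by
    intro x
    rw [← ENNReal.rpow_natCast, ← ENNReal.rpow_natCast, ← ENNReal.rpow_mul, ← ENNReal.rpow_mul,
      ← ENNReal.rpow_add_of_nonneg _ _
        (mul_nonneg (by positivity) (by linarith)) (by positivity)]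
    congr 1; push_cast; linear_combination 2 * hθn
  simp only [e] at hol
  refine hol.trans ?_
  calc _ ≤ SS u ^ (1 - θ) * (((n + 1).factorial : ℝ≥0∞) ^ 2 * SS u ^ (n + 1)) ^ θ := by
        gcongr
        · exact le_self_add
        · exact aux_sob_nat u hu h n
    _ = _ := by
      rw [ENNReal.mul_rpow_of_nonneg _ _ hθ0, mul_left_comm]
      congr 1
      rw [← ENNReal.rpow_natCast, ← ENNReal.rpow_mul,
        ← ENNReal.rpow_add_of_nonneg _ _ (by linarith) (by positivity)]
      congr 1; push_cast; linear_combination hθn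

def nL (p : ℝ) (f : E2 → ℝ≥0∞) : ℝ≥0∞ := (∫⁻ x, f x ^ p) ^ (1 / p)

def NN (x : E2) : ℝ≥0∞ := ENNReal.ofReal ‖x‖⁻¹

def Nn (R : ℝ) : E2 → ℝ≥0∞ := (Metric.ball (0 : E2) R).indicator NN

def Nf : E2 → ℝ≥0∞ := (Metric.ball (0 : E2) 1)ᶜ.indicator NN

theorem NN_meas : Measurable NN := by unfold NN; fun_prop

theorem Nn_meas (R : ℝ) : Measurable (Nn R) := NN_meas.indicator measurableSet_ball

theorem Nf_meas : Measurable Nf := NN_meas.indicator measurableSet_ball.compl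

theorem aux_near1 : ∃ c : ℝ≥0∞, c ≠ ⊤ ∧ ∀ R : ℝ, 0 ≤ R → ∫⁻ x, Nn R x ^ (1 : ℝ) ≤ c * ENNReal.ofReal R := by
  refine ⟨ENNReal.ofReal (2 * (volume : Measure E2).real (Metric.ball 0 1)), by finiteness,
    fun R hR => ?_⟩
  have hfin : Module.finrank ℝ E2 = 2 := by simp
  set f : ℝ → ℝ := (Set.Iio R).indicator fun y => y⁻¹ with hf
  have e1 : ∀ x : E2, Nn R x ^ (1 : ℝ) = ENNReal.ofReal (f ‖x‖) := by
    intro x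
    rw [ENNReal.rpow_one]
    by_cases hx : ‖x‖ < R <;> simp [Nn, NN, f, Set.indicator, hx]
  have e2 : ∀ y ∈ Set.Ioi (0 : ℝ), y ^ (Module.finrank ℝ E2 - 1) • f y
      = (Set.Iio R).indicator (fun _ => (1 : ℝ)) y := by
    intro y hy
    have hy' : y ≠ 0 := ne_of_gt hy
    rw [hfin]
    by_cases hx : y < R <;> simp [f, Set.indicator, hx, hy']
  have i0 : IntegrableOn ((Set.Iio R).indicator (fun _ => (1 : ℝ))) (Set.Ioi 0) := by
    rw [IntegrableOn, integrable_indicator_iff measurableSet_Iio, IntegrableOn,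
      Measure.restrict_restrict measurableSet_Iio]
    exact integrableOn_const (by
      rw [Set.inter_comm, Set.Ioi_inter_Iio, Real.volume_Ioo]; finiteness)
  have hint : Integrable (fun x : E2 => f ‖x‖) := by
    rw [integrable_fun_norm_addHaar, integrableOn_congr_fun e2 measurableSet_Ioi]
    exact i0
  have hnn : ∀ x : E2, 0 ≤ f ‖x‖ := by
    intro x
    exact Set.indicator_apply_nonneg fun _ => inv_nonneg.2 (norm_nonneg x)
  simp_rw [e1]
  rw [← ofReal_integral_eq_lintegral_ofReal hint (Filter.Eventually.of_forall hnn),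
    integral_fun_norm_addHaar, setIntegral_congr_fun measurableSet_Ioi e2,
    setIntegral_indicator measurableSet_Iio, Set.Ioi_inter_Iio, hfin,
    ← ENNReal.ofReal_mul (by positivity)]
  apply le_of_eq
  congr 1
  simp [hR]
  ring

theorem aux_near (r : ℝ) (hr0 : 0 < r) (hr : r < 2) : ∫⁻ x, Nn 1 x ^ r < ⊤ := by
  have hfin : Module.finrank ℝ E2 = 2 := by simp
  have h := integrableOn_ball_of_norm_le_rpow (μ := (volume : Measure E2))
    (f := fun x : E2 => (‖x‖⁻¹) ^ r) (C := 1) (α := r) (r := 1) (by rw [hfin]; norm_num)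
    (by rw [hfin]; exact_mod_cast hr)
    (Filter.Eventually.of_forall fun x => by
      rw [one_mul, Real.rpow_neg (norm_nonneg x), Real.inv_rpow (norm_nonneg x),
        Real.norm_of_nonneg (by positivity)])
    (by apply Measurable.aestronglyMeasurable; fun_prop)
  have h2 := h.2
  rw [hasFiniteIntegral_iff_enorm] at h2
  rw [← lintegral_indicator measurableSet_ball] at h2
  refine lt_of_le_of_lt (lintegral_mono fun x => ?_) h2
  by_cases hx : x ∈ Metric.ball (0 : E2) 1
  · simp only [Nn, Set.indicator_of_mem hx, NN]
    rw [ENNReal.ofReal_rpow_of_nonneg (by positivity) hr0.le, Real.enorm_of_nonneg (by positivity)]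
  · simp [Nn, Set.indicator_of_notMem hx, hr0]

theorem aux_far (p : ℝ) (hp : 2 < p) : ∫⁻ x, Nf x ^ p < ⊤ := by
  have hp0 : 0 < p := by linarith
  have h := (integrable_one_add_norm (E := E2) (μ := volume) (r := p) (by simpa using hp)).const_mul
    ((2 : ℝ) ^ p)
  have h2 := h.2
  rw [hasFiniteIntegral_iff_enorm] at h2
  refine lt_of_le_of_lt (lintegral_mono fun x => ?_) h2
  by_cases hx : x ∈ (Metric.ball (0 : E2) 1)ᶜ
  · simp only [Nf, Set.indicator_of_mem hx, NN]
    have hx1 : 1 ≤ ‖x‖ := by simpa using hx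
    rw [ENNReal.ofReal_rpow_of_nonneg (by positivity) hp0.le, Real.enorm_of_nonneg (by positivity)]
    apply ENNReal.ofReal_le_ofReal
    rw [Real.rpow_neg (by positivity), ← Real.inv_rpow (by positivity),
      ← Real.mul_rpow (by positivity) (by positivity)]
    apply Real.rpow_le_rpow (by positivity) _ hp0.le
    rw [← div_eq_mul_inv, le_div_iff₀ (by positivity), inv_mul_le_iff₀ (by positivity)]
    linarith
  · simp [Nf, Set.indicator_of_notMem hx, hp0]

theorem nL_young (f g : E2 → ℝ≥0∞) (hf : Measurable f) (hg : Measurable g) (p r q : ℝ)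
    (hr : 0 < r) (hq : 0 < q) (hrp : r ≤ p) (hqp : q ≤ p) (h : 1 / r + 1 / q = 1 + 1 / p) :
    nL p (fun x => ∫⁻ y, g (x - y) * f y) ≤ nL r g * nL q f := by
  have hp : 0 < p := hr.trans_le hrp
  unfold nL
  refine (ENNReal.rpow_le_rpow (aux_young f g hf hg p r q hr hq hrp hqp h)
    (by positivity : 0 ≤ 1 / p)).trans (le_of_eq ?_)
  rw [ENNReal.mul_rpow_of_nonneg _ _ (by positivity), ← ENNReal.rpow_mul, ← ENNReal.rpow_mul]
  congr 2 <;> field_simp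

theorem nL_add (p : ℝ) (hp : 1 ≤ p) (f g : E2 → ℝ≥0∞) (hf : Measurable f) (hg : Measurable g) :
    nL p (fun x => f x + g x) ≤ nL p f + nL p g :=
  ENNReal.lintegral_Lp_add_le hf.aemeasurable hg.aemeasurable hp

theorem conv_meas (f g : E2 → ℝ≥0∞) (hf : Measurable f) (hg : Measurable g) :
    Measurable fun x => ∫⁻ y, g (x - y) * f y := by
  have hm : Measurable (fun z : E2 × E2 => g (z.1 - z.2) * f z.2) :=
    ((hg.comp (measurable_fst.sub measurable_snd))).mul ((hf.comp measurable_snd))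
  exact hm.lintegral_prod_right'

theorem aux_conv (p : ℝ) (hp : 2 < p) : ∃ C : ℝ≥0∞, C ≠ ⊤ ∧ ∀ w d : E2 → ℝ≥0∞,
    Measurable w → Measurable d →
    nL p (fun x => ∫⁻ y, NN (x - y) * (w y * d y)) ≤ C * (nL (2 * p) w + nL 2 w) * nL 2 d := by
  have hp0 : 0 < p := by linarith
  set r := 2 * p / (p + 1) with hr
  have hr0 : 0 < r := by positivity
  have hr1 : 1 / r = 1 / 2 + 1 / (2 * p) := by rw [hr]; field_simp; 
  have hr2 : r < 2 := by rw [hr, div_lt_iff₀ (by positivity)]; linarith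
  have hn : nL r (Nn 1) ≠ ⊤ := by
    unfold nL
    exact ENNReal.rpow_ne_top_of_nonneg (by positivity) (aux_near r hr0 hr2).ne
  have hf : nL p Nf ≠ ⊤ := by
    unfold nL
    exact ENNReal.rpow_ne_top_of_nonneg (by positivity) (aux_far p hp).ne
  refine ⟨nL r (Nn 1) + nL p Nf, by finiteness, fun w d mw md => ?_⟩
  have mwd : Measurable fun y => w y * d y := mw.mul md
  have split : (fun x => ∫⁻ y, NN (x - y) * (w y * d y)) =
      fun x => (∫⁻ y, Nn 1 (x - y) * (w y * d y)) + ∫⁻ y, Nf (x - y) * (w y * d y) := by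
    funext x
    have mm : Measurable fun y => Nn 1 (x - y) * (w y * d y) :=
      ((Nn_meas 1).comp (measurable_const.sub measurable_id)).mul mwd
    rw [← lintegral_add_left mm]
    refine lintegral_congr fun y => ?_
    rw [← add_mul]
    congr 1
    exact (Set.indicator_self_add_compl_apply _ _ _).symm
  rw [split]
  refine (nL_add p (by linarith) _ _ (conv_meas _ _ mwd (Nn_meas 1))
    (conv_meas _ _ mwd Nf_meas)).trans ?_
  have y1 := nL_young _ _ mwd (Nn_meas 1) p r r hr0 hr0 (by linarith) (by linarith)
    (by rw [hr1]; field_simp; ring)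
  have y2 := nL_young _ _ mwd Nf_meas p p 1 hp0 one_pos le_rfl (by linarith)
    (by ring)
  have h1 : nL r (fun y => w y * d y) ≤ nL (2 * p) w * nL 2 d := by
    exact ENNReal.lintegral_Lp_mul_le_Lq_mul_Lr hr0 (by
      rw [hr, div_lt_iff₀ (by positivity)]; nlinarith) (by rw [hr1]; ring) volume
      mw.aemeasurable md.aemeasurable
  have h2 : nL 1 (fun y => w y * d y) ≤ nL 2 w * nL 2 d := by
    exact ENNReal.lintegral_Lp_mul_le_Lq_mul_Lr one_pos (by norm_num) (by norm_num) volume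
      mw.aemeasurable md.aemeasurable
  calc _ ≤ nL r (Nn 1) * (nL (2 * p) w * nL 2 d) + nL p Nf * (nL 2 w * nL 2 d) := by
        gcongr
        · exact y1.trans (by gcongr)
        · exact y2.trans (by gcongr)
    _ ≤ nL r (Nn 1) * ((nL (2 * p) w + nL 2 w) * nL 2 d)
        + nL p Nf * ((nL (2 * p) w + nL 2 w) * nL 2 d) := by
        gcongr
        · exact le_self_add
        · exact le_add_self
    _ = _ := by ring

theorem norm_perp (x : E2) : ‖perp x‖ = ‖x‖ := by
  simp [perp, EuclideanSpace.norm_eq, Fin.sum_univ_two, add_comm]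

theorem K_meas (R : ℝ) : Measurable (K R) := by
  have hp : Measurable perp := by
    have : Continuous perp := by
      unfold perp
      apply (PiLp.continuous_toLp 2 _).comp
      refine continuous_pi fun i => ?_
      fin_cases i
      · simp; fun_prop
      · simp; fun_prop
    exact this.measurable
  have h2 : Measurable fun x : E2 => ((max R ‖x‖) ^ 2)⁻¹ := by fun_prop
  exact h2.smul hp

theorem K_le (R : ℝ) (x : E2) : ‖K R x‖ₑ ≤ NN x := by
  rw [← ofReal_norm]
  unfold NN
  apply ENNReal.ofReal_le_ofReal
  rw [K, norm_smul, norm_perp, Real.norm_of_nonneg (by positivity)]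
  rcases (norm_nonneg x).eq_or_lt with h | h
  · rw [← h]; simp
  · have : (max R ‖x‖ ^ 2)⁻¹ ≤ (‖x‖ ^ 2)⁻¹ := by
      gcongr
      exact le_max_right _ _
    calc _ ≤ (‖x‖ ^ 2)⁻¹ * ‖x‖ := by gcongr
      _ = _ := by field_simp

theorem K_diff (R : ℝ) (x : E2) : ‖K 0 x - K R x‖ₑ ≤ Nn R x := by
  by_cases hx : x ∈ Metric.ball (0 : E2) R
  · simp only [Nn, Set.indicator_of_mem hx, NN]
    rw [← ofReal_norm]
    apply ENNReal.ofReal_le_ofReal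
    have hx' : ‖x‖ < R := by simpa using hx
    rw [K, K, ← sub_smul, norm_smul, norm_perp, max_eq_left hx'.le, max_eq_right (norm_nonneg x)]
    rcases (norm_nonneg x).eq_or_lt with h | h
    · rw [← h]; simp
    · have h1 : (R ^ 2)⁻¹ ≤ (‖x‖ ^ 2)⁻¹ := by gcongr
      have h2 : 0 ≤ (R ^ 2)⁻¹ := by positivity
      rw [Real.norm_of_nonneg (by linarith)]
      calc _ ≤ (‖x‖ ^ 2)⁻¹ * ‖x‖ := by gcongr; linarith
        _ = _ := by field_simp
  · have hx' : R ≤ ‖x‖ := by simpa using hx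
    rw [K, K, max_eq_right hx', max_eq_right (norm_nonneg x)]
    simp

theorem H1_eq (u : E2 → ℂ) : H1 u = SS u ^ (1 / 2 : ℝ) := by
  have h2 : ∀ {F : Type} [NormedAddCommGroup F] (f : E2 → F),
      eLpNorm f 2 volume ^ 2 = ∫⁻ x, ‖f x‖ₑ ^ 2 := by
    intro F _ f
    have := eLpNorm_nnreal_pow_eq_lintegral (μ := (volume : Measure E2)) (f := f)
      (p := 2) (by norm_num)
    simpa using this
  unfold H1 SS
  rw [h2, h2]

theorem nL2_eq (f : E2 → ℂ) : nL 2 (fun x => ‖f x‖ₑ) = eLpNorm f 2 volume := by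
  rw [eLpNorm_eq_lintegral_rpow_enorm_toReal (by simp) (by simp)]
  simp [nL]

theorem nL2_le (u : E2 → ℂ) : nL 2 (fun x => ‖u x‖ₑ) ≤ H1 u := by
  rw [H1_eq, nL]
  gcongr
  refine le_trans (le_of_eq ?_) (le_self_add : ∫⁻ x, ‖u x‖ₑ ^ 2 ≤ SS u)
  simp

theorem nL_sob (p : ℝ) (hp : 2 < p) : ∃ A : ℝ≥0∞, A ≠ ⊤ ∧ ∀ u : E2 → ℂ, Differentiable ℝ u →
    H1 u < ⊤ → nL (2 * p) (fun x => ‖u x‖ₑ) ≤ A * H1 u ∧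
      nL p (fun x => ‖u x‖ₑ * ‖u x‖ₑ) ≤ A * H1 u ^ 2 := by
  have hp0 : 0 < p := by linarith
  obtain ⟨C, hC, h⟩ := aux_sob p (by linarith)
  refine ⟨C ^ (1 / (2 * p)) + C ^ (1 / p), by finiteness, fun u hu hH => ?_⟩
  have hS : SS u < ⊤ := by
    by_contra hcon
    rw [not_lt, top_le_iff] at hcon
    rw [H1_eq, hcon] at hH
    simp at hH
  have hb := h u hu hS
  constructor
  · have : nL (2 * p) (fun x => ‖u x‖ₑ) ≤ C ^ (1 / (2 * p)) * H1 u := by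
      rw [H1_eq, nL]
      refine (ENNReal.rpow_le_rpow hb (by positivity)).trans (le_of_eq ?_)
      rw [ENNReal.mul_rpow_of_nonneg _ _ (by positivity), ← ENNReal.rpow_mul]
      congr 2; field_simp
    refine this.trans ?_
    gcongr
    exact le_self_add
  · have : nL p (fun x => ‖u x‖ₑ * ‖u x‖ₑ) ≤ C ^ (1 / p) * H1 u ^ 2 := by
      rw [H1_eq, nL]
      have e : ∀ x, (‖u x‖ₑ * ‖u x‖ₑ) ^ p = ‖u x‖ₑ ^ (2 * p) := by
        intro x
        rw [← sq, ← ENNReal.rpow_natCast, ← ENNReal.rpow_mul]; norm_num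
      simp_rw [e]
      refine (ENNReal.rpow_le_rpow hb (by positivity)).trans (le_of_eq ?_)
      rw [ENNReal.mul_rpow_of_nonneg _ _ (by positivity), ← ENNReal.rpow_mul,
        ← ENNReal.rpow_natCast, ← ENNReal.rpow_mul]
      congr 2; field_simp; norm_num
    refine this.trans ?_
    gcongr
    exact le_add_self

theorem conv_integrable (R : ℝ) (u : E2 → ℂ) (hu : Differentiable ℝ u) (x : E2)
    (h : ∫⁻ y, NN (x - y) * (‖u y‖ₑ * ‖u y‖ₑ) < ⊤) :
    Integrable fun y => ‖u y‖ ^ 2 • K R (x - y) := by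
  refine ⟨?_, ?_⟩
  · have h1 : Measurable fun y => K R (x - y) := (K_meas R).comp (measurable_const.sub measurable_id)
    have h2 : Measurable fun y => ‖u y‖ ^ 2 := (hu.continuous.norm.pow 2).measurable
    exact (h2.smul h1).aestronglyMeasurable
  · rw [hasFiniteIntegral_iff_enorm]
    refine lt_of_le_of_lt (lintegral_mono fun y => ?_) h
    rw [enorm_smul, enorm_pow, enorm_norm, sq, mul_comm]
    gcongr
    exact K_le R _

theorem pointwise_bound (R : ℝ) (u v : E2 → ℂ) (hu : Differentiable ℝ u)
    (hv : Differentiable ℝ v) (x : E2)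
    (h1 : ∫⁻ y, NN (x - y) * (‖u y‖ₑ * ‖u y‖ₑ) < ⊤)
    (h2 : ∫⁻ y, NN (x - y) * (‖v y‖ₑ * ‖v y‖ₑ) < ⊤) :
    ‖convKs 0 (fun y => ‖u y‖ ^ 2) x - convKs R (fun y => ‖v y‖ ^ 2) x‖ₑ ≤
      (∫⁻ y, NN (x - y) * (‖u y‖ₑ * ‖(u - v) y‖ₑ)) + (∫⁻ y, NN (x - y) * (‖v y‖ₑ * ‖(u - v) y‖ₑ))
        + ∫⁻ y, Nn R (x - y) * (‖v y‖ₑ * ‖v y‖ₑ) := by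
  have mu : Measurable fun x => ‖u x‖ₑ := hu.continuous.measurable.enorm
  have mv : Measurable fun x => ‖v x‖ₑ := hv.continuous.measurable.enorm
  have md : Measurable fun x => ‖(u - v) x‖ₑ := (hu.sub hv).continuous.measurable.enorm
  have mN : Measurable fun y => NN (x - y) := NN_meas.comp (measurable_const.sub measurable_id)
  have m1 : Measurable fun y => NN (x - y) * (‖u y‖ₑ * ‖(u - v) y‖ₑ) := mN.mul (mu.mul md)
  have m2 : Measurable fun y => NN (x - y) * (‖v y‖ₑ * ‖(u - v) y‖ₑ) := mN.mul (mv.mul md)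
  have m12 : Measurable fun y => NN (x - y) * (‖u y‖ₑ * ‖(u - v) y‖ₑ)
      + NN (x - y) * (‖v y‖ₑ * ‖(u - v) y‖ₑ) := m1.add m2
  unfold convKs
  rw [← integral_sub (conv_integrable 0 u hu x h1) (conv_integrable R v hv x h2),
    ← lintegral_add_left m1, ← lintegral_add_left m12]
  refine (enorm_integral_le_lintegral_enorm _).trans (lintegral_mono fun y => ?_)
  have e : ‖u y‖ ^ 2 • K 0 (x - y) - ‖v y‖ ^ 2 • K R (x - y)
      = (‖u y‖ ^ 2 - ‖v y‖ ^ 2) • K 0 (x - y) + ‖v y‖ ^ 2 • (K 0 (x - y) - K R (x - y)) := by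
    module
  have hd : ‖‖u y‖ ^ 2 - ‖v y‖ ^ 2‖ₑ ≤ (‖u y‖ₑ + ‖v y‖ₑ) * ‖(u - v) y‖ₑ := by
    have : ‖u y‖ ^ 2 - ‖v y‖ ^ 2 = (‖u y‖ + ‖v y‖) * (‖u y‖ - ‖v y‖) := by ring
    rw [this, enorm_mul]
    gcongr
    · refine (enorm_add_le _ _).trans ?_
      rw [enorm_norm, enorm_norm]
    · exact enorm_le_iff_norm_le.2 (abs_norm_sub_norm_le _ _)
  rw [e]
  refine (enorm_add_le _ _).trans ?_
  rw [enorm_smul, enorm_smul, enorm_pow, enorm_norm]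
  calc _ ≤ ((‖u y‖ₑ + ‖v y‖ₑ) * ‖(u - v) y‖ₑ) * NN (x - y) + ‖v y‖ₑ ^ 2 * Nn R (x - y) := by
        gcongr
        · exact K_le 0 _
        · exact K_diff R _
    _ = _ := by ring

theorem ae_of_nL (p : ℝ) (hp : 0 < p) (f : E2 → ℝ≥0∞) (hf : Measurable f) (h : nL p f < ⊤) :
    ∀ᵐ x, f x < ⊤ := by
  unfold nL at h
  have h' : ∫⁻ x, f x ^ p ≠ ⊤ := by
    intro hcon
    rw [hcon, ENNReal.top_rpow_of_pos (by positivity)] at h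
    exact lt_irrefl _ h
  filter_upwards [ae_lt_top (hf.pow_const p) h'] with x hx
  exact (ENNReal.rpow_lt_top_iff_of_pos hp).1 hx

/-- Lemma 2.1, eq. (2.3), case `s = 0`: for `2 < p < ∞` there is `C_p > 0` such that
`‖K₀ ∗ |u|² − K_R ∗ |v|²‖_p ≤ C_p (‖v‖_{H¹}² R + (‖u‖_{H¹} + ‖v‖_{H¹}) ‖u − v‖₂)`
for all `R ≥ 0` and `u, v ∈ H¹(ℝ², ℂ)`. -/
theorem statement1 (p : ℝ) (hp : 2 < p) :
    ∃ C : ℝ, 0 < C ∧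
      ∀ R : ℝ, 0 ≤ R → ∀ u v : E2 → ℂ,
        Differentiable ℝ u → H1 u < ⊤ → Differentiable ℝ v → H1 v < ⊤ →
        eLpNorm
            (fun x => convKs 0 (fun y => ‖u y‖ ^ 2) x - convKs R (fun y => ‖v y‖ ^ 2) x)
            (ENNReal.ofReal p) volume
          ≤ ENNReal.ofReal C *
              (H1 v ^ 2 * ENNReal.ofReal R + (H1 u + H1 v) * eLpNorm (u - v) 2 volume) := by
  have hp0 : 0 < p := by linarith
  obtain ⟨A, hA, hsob⟩ := nL_sob p hp
  obtain ⟨B, hB, hconv⟩ := aux_conv p hp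
  obtain ⟨c, hc, hnear⟩ := aux_near1
  set D : ℝ≥0∞ := B * (A + 1) + c * A with hD
  have hDt : D ≠ ⊤ := by rw [hD]; finiteness
  refine ⟨D.toReal + 1, by positivity, fun R hR u v hu hHu hv hHv => ?_⟩
  have hDle : D ≤ ENNReal.ofReal (D.toReal + 1) := by
    rw [← ENNReal.ofReal_toReal hDt]
    apply ENNReal.ofReal_le_ofReal
    rw [ENNReal.toReal_ofReal ENNReal.toReal_nonneg]
    linarith
  refine le_trans ?_ (mul_le_mul' hDle le_rfl)
  have mu : Measurable fun x => ‖u x‖ₑ := hu.continuous.measurable.enorm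
  have mv : Measurable fun x => ‖v x‖ₑ := hv.continuous.measurable.enorm
  have md : Measurable fun x => ‖(u - v) x‖ₑ := (hu.sub hv).continuous.measurable.enorm
  have general : ∀ w : E2 → ℂ, Differentiable ℝ w → H1 w < ⊤ → ∀ d : E2 → ℝ≥0∞, Measurable d →
      nL p (fun x => ∫⁻ y, NN (x - y) * (‖w y‖ₑ * d y)) ≤ B * (A + 1) * H1 w * nL 2 d := by
    intro w hw hHw d hd
    refine (hconv _ d hw.continuous.measurable.enorm hd).trans ?_
    have := add_le_add (hsob w hw hHw).1 (nL2_le w)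
    calc _ ≤ B * (A * H1 w + H1 w) * nL 2 d := by gcongr
      _ = _ := by ring
  have aefin : ∀ w : E2 → ℂ, Differentiable ℝ w → H1 w < ⊤ →
      ∀ᵐ x, ∫⁻ y, NN (x - y) * (‖w y‖ₑ * ‖w y‖ₑ) < ⊤ := by
    intro w hw hHw
    have mw : Measurable fun x => ‖w x‖ₑ := hw.continuous.measurable.enorm
    refine ae_of_nL p hp0 _ (conv_meas _ _ (mw.mul mw) NN_meas) ?_
    refine lt_of_le_of_lt (general w hw hHw _ mw) ?_
    have h2 : nL 2 (fun x => ‖w x‖ₑ) < ⊤ := (nL2_le w).trans_lt hHw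
    exact ENNReal.mul_lt_top (ENNReal.mul_lt_top (by finiteness) hHw) h2
  have m1 := conv_meas _ _ (mu.mul md) NN_meas
  have m2 := conv_meas _ _ (mv.mul md) NN_meas
  have m3 := conv_meas _ _ (mv.mul mv) (Nn_meas R)
  have T3 : nL p (fun x => ∫⁻ y, Nn R (x - y) * (‖v y‖ₑ * ‖v y‖ₑ))
      ≤ (c * ENNReal.ofReal R) * (A * H1 v ^ 2) := by
    refine (nL_young _ _ (mv.mul mv) (Nn_meas R) p 1 p one_pos hp0 (by linarith) le_rfl
      (by ring)).trans ?_
    refine mul_le_mul' ?_ (hsob v hv hHv).2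
    simpa [nL] using hnear R hR
  rw [eLpNorm_eq_lintegral_rpow_enorm_toReal (by simpa using hp0) (by simp),
    ENNReal.toReal_ofReal hp0.le]
  calc _ ≤ nL p (fun x => ((∫⁻ y, NN (x - y) * (‖u y‖ₑ * ‖(u - v) y‖ₑ))
          + (∫⁻ y, NN (x - y) * (‖v y‖ₑ * ‖(u - v) y‖ₑ)))
          + ∫⁻ y, Nn R (x - y) * (‖v y‖ₑ * ‖v y‖ₑ)) := by
        unfold nL
        refine ENNReal.rpow_le_rpow (lintegral_mono_ae ?_) (by positivity)
        filter_upwards [aefin u hu hHu, aefin v hv hHv] with x h1 h2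
        exact ENNReal.rpow_le_rpow (pointwise_bound R u v hu hv x h1 h2) hp0.le
    _ ≤ (B * (A + 1) * H1 u * nL 2 (fun x => ‖(u - v) x‖ₑ)
          + B * (A + 1) * H1 v * nL 2 (fun x => ‖(u - v) x‖ₑ))
          + (c * ENNReal.ofReal R) * (A * H1 v ^ 2) := by
        refine (nL_add p (by linarith) _ _ (m1.add m2) m3).trans (add_le_add ?_ T3)
        refine (nL_add p (by linarith) _ _ m1 m2).trans ?_
        exact add_le_add (general u hu hHu _ md) (general v hv hHv _ md)
    _ = (c * A) * (H1 v ^ 2 * ENNReal.ofReal R)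
          + (B * (A + 1)) * ((H1 u + H1 v) * eLpNorm (u - v) 2 volume) := by
        rw [nL2_eq]; ring
    _ ≤ D * (H1 v ^ 2 * ENNReal.ofReal R)
          + D * ((H1 u + H1 v) * eLpNorm (u - v) 2 volume) := by
        gcongr
        · exact le_add_self
        · exact le_self_add
    _ = _ := by ring
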